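/- Theorem 1: For the quaternary sequence u₃ = φ[s₂, s₄] of period p, the 4-adic complexity satisfies Φ₄(u₃) ≥ ⌊log₄((4^p − 1)/(3(1+2p)) + 1)⌋. -/

import Mathlib

open Finset

/-- The cyclotomic class `D_i` of order 4 modulo `p` with respect to the
primitive root `θ`: `{θ^(i+4j) mod p : 0 ≤ j < (p-1)/4}`. -/
def cycD (p θ i : ℕ) : Finset ℕ :=
  (Finset.range ((p - 1) / 4)).image fun j => θ ^ (i + 4 * j) % p

/-- The binary sequence `s₁` with support set `D₀ ∪ D₁`. -/
def seqS1 (p θ : ℕ) (t : ℕ) : ℕ := if t ∈ cycD p θ 0 ∪ cycD p θ 1 then 1 else 0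

/-- The binary sequence `s₂` with support set `D₀ ∪ D₃`. -/
def seqS2 (p θ : ℕ) (t : ℕ) : ℕ := if t ∈ cycD p θ 0 ∪ cycD p θ 3 then 1 else 0

/-- The binary sequence `s₃` with support set `D₁ ∪ D₂`. -/
def seqS3 (p θ : ℕ) (t : ℕ) : ℕ := if t ∈ cycD p θ 1 ∪ cycD p θ 2 then 1 else 0

/-- The binary sequence `s₄` with support set `D₂ ∪ D₃`. -/
def seqS4 (p θ : ℕ) (t : ℕ) : ℕ := if t ∈ cycD p θ 2 ∪ cycD p θ 3 then 1 else 0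

/-- The bitwise complement `s + 1` of a binary sequence. -/
def seqCompl (s : ℕ → ℕ) (t : ℕ) : ℕ := 1 - s t

/-- The inverse Gray mapping: `φ[0,0]=0, φ[0,1]=1, φ[1,1]=2, φ[1,0]=3`. -/
def gray (a b : ℕ) : ℕ := if a = 0 then b else 3 - b

/-- The quaternary sequence `φ[r,s] : t ↦ φ[r(t), s(t)]`. -/
def graySeq (r s : ℕ → ℕ) (t : ℕ) : ℕ := gray (r t) (s t)

/-- The generating value `U(4) = Σ_{t=0}^{p-1} u(t)·4^t` of a quaternary
sequence `u` of period `p`. -/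
def seqVal (p : ℕ) (u : ℕ → ℕ) : ℕ := ∑ t ∈ Finset.range p, u t * 4 ^ t

/-- The 4-adic complexity `Φ₄(u) = ⌊log₄((4^p − 1)/gcd(4^p − 1, U(4)) + 1)⌋`
of a quaternary sequence `u` of period `p`. -/
noncomputable def adicComplexity4 (p : ℕ) (u : ℕ → ℕ) : ℤ :=
  ⌊Real.logb 4 (((4 ^ p - 1 : ℕ) : ℝ) / ((Nat.gcd (4 ^ p - 1) (seqVal p u) : ℕ) : ℝ) + 1)⌋

lemma prime_fac_mod {p r : ℕ} (hp : p.Prime) (hp8 : p % 8 = 5) (hr : r.Prime)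
    (h3 : r ≠ 3) (h : r ∣ 4 ^ p - 1) : r % (2 * p) = 1 := by
  have := Fact.mk hr
  have h1 : (1:ℕ) ≤ 4 ^ p := Nat.one_le_pow _ _ (by norm_num)
  have h4 : (4 : ZMod r) ^ p = 1 := by
    have := (ZMod.natCast_eq_zero_iff (4 ^ p - 1) r).2 h
    rw [Nat.cast_sub h1] at this
    push_cast at this
    exact sub_eq_zero.1 this
  have hne : (4 : ZMod r) ≠ 1 := by
    intro h'
    have : ((3 : ℕ) : ZMod r) = 0 := by
      push_cast
      linear_combination h'
    rw [ZMod.natCast_eq_zero_iff] at this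
    exact h3 ((Nat.prime_dvd_prime_iff_eq hr Nat.prime_three).1 this)
  have ho : orderOf (4 : ZMod r) = p := by
    have := Fact.mk hp
    exact orderOf_eq_prime h4 hne
  have h0 : (4 : ZMod r) ≠ 0 := by
    intro h'
    rw [h', zero_pow hp.ne_zero] at h4
    exact zero_ne_one h4
  have hd : p ∣ r - 1 := by
    rw [← ho]
    exact orderOf_dvd_of_pow_eq_one (ZMod.pow_card_sub_one_eq_one h0)
  have hr2 : r % 2 = 1 := by
    rcases hr.eq_two_or_odd with h2 | h2
    · exfalso
      apply h0
      subst h2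
      exact_mod_cast (ZMod.natCast_eq_zero_iff 4 2).2 (by norm_num)
    · exact h2
  have h2d : 2 ∣ r - 1 := by omega
  have hc : Nat.Coprime 2 p := by
    rw [Nat.coprime_two_left]; exact Nat.odd_iff.2 (by omega)
  obtain ⟨c, hc⟩ := hc.mul_dvd_of_dvd_of_dvd h2d hd
  have : r = 1 + 2 * p * c := by have := hr.one_lt; omega
  rw [this, Nat.add_mul_mod_self_left]
  exact Nat.mod_eq_of_lt (by have := hp.two_le; omega)

lemma all_fac_mod {n : ℕ} (hn : 1 < n) (d : ℕ) (hd : d ≠ 0)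
    (h : ∀ r, r.Prime → r ∣ d → r % n = 1) : d % n = 1 := by
  induction d using Nat.recOnMul with
  | zero => exact absurd rfl hd
  | one => exact Nat.mod_eq_of_lt hn
  | prime q hq => exact h q hq dvd_rfl
  | mul a b iha ihb =>
    have ha := iha (by rintro rfl; simp at hd) (fun r hr hra => h r hr (hra.mul_right b))
    have hb := ihb (by rintro rfl; simp at hd) (fun r hr hra => h r hr (hra.mul_left a))
    rw [Nat.mul_mod, ha, hb]
    exact Nat.mod_eq_of_lt hn

lemma no_four {p : ℕ} (hp : p.Prime) (hp8 : p % 8 = 5) (h : (1 + 2 * p * 2) ∣ 4 ^ p - 1)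
    (hf : ∀ r, r.Prime → r ∣ (1 + 2 * p * 2) → r % (2 * p) = 1) : False := by
  set d := 1 + 2 * p * 2 with hd
  have hp2 := hp.two_le
  have hdp : d.Prime := by
    by_contra hnp
    have h1 : d.minFac.Prime := Nat.minFac_prime (by omega)
    have h2 := Nat.minFac_sq_le_self (by omega) hnp
    have h3 := hf _ h1 (Nat.minFac_dvd d)
    have h4 : 2 * p ≤ d.minFac := by
      by_contra hlt
      rw [Nat.mod_eq_of_lt (by omega)] at h3
      exact h1.one_lt.ne' h3
    nlinarith
  have := Fact.mk hdp
  have h1 : (1:ℕ) ≤ 4 ^ p := Nat.one_le_pow _ _ (by norm_num)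
  have h4 : (2 : ZMod d) ^ (d / 2) = 1 := by
    have := (ZMod.natCast_eq_zero_iff (4 ^ p - 1) d).2 h
    rw [Nat.cast_sub h1] at this
    push_cast at this
    have e : d / 2 = 2 * p := by omega
    rw [e, pow_mul]
    norm_num
    exact sub_eq_zero.1 this
  have h20 : (2 : ZMod d) ≠ 0 := by
    intro h'
    rw [h', zero_pow (by omega)] at h4
    exact zero_ne_one h4
  have := (ZMod.euler_criterion d h20).2 h4
  rw [ZMod.exists_sq_eq_two_iff (by omega)] at this
  omega

lemma final_nt {p d : ℕ} (x y : ℤ) (hp : p.Prime) (hp8 : p % 8 = 5)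
    (hxy : (p : ℤ) = x ^ 2 + 4 * y ^ 2) (hd : d ∣ 4 ^ p - 1) (hd3 : ¬ 3 ∣ d)
    (hM : (d : ℤ) ∣ (9 + 5 * p) ^ 2 - p * (6 - 8 * y) ^ 2) : d ≤ 1 + 2 * p := by
  have hp2 := hp.two_le
  have hd0 : d ≠ 0 := by rintro rfl; simp at hd3
  have hf : ∀ r, r.Prime → r ∣ d → r % (2 * p) = 1 := fun r hr hrd =>
    prime_fac_mod hp hp8 hr (by rintro rfl; exact hd3 hrd) (hrd.trans hd)
  have hdm := all_fac_mod (by omega) d hd0 hf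
  obtain ⟨k, hk⟩ : ∃ k, d = 1 + 2 * p * k := ⟨d / (2 * p), by
    have := Nat.mod_add_div d (2 * p); omega⟩
  by_contra hlt
  have hk2 : 2 ≤ k := by
    by_contra h
    have : k = 0 ∨ k = 1 := by omega
    rcases this with h | h <;> subst h <;> omega
  rcases lt_or_ge p 17 with h17 | h17
  · have : p = 5 ∨ p = 13 := by omega
    rcases this with h | h
    · subst h
      push_cast at hxy hM
      have hy1 : y ≤ 1 := by nlinarith [sq_nonneg x]
      have hy2 : -1 ≤ y := by nlinarith [sq_nonneg x]
      have hdd : (d : ℤ) ∣ 1023 := by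
        have h := Int.natCast_dvd_natCast.2 hd
        norm_num at h
        exact h
      have hx1 : x ≤ 2 := by nlinarith [sq_nonneg y]
      have hx2 : -2 ≤ x := by nlinarith [sq_nonneg y]
      have := Int.dvd_coe_gcd hM hdd
      have h2 : (d:ℤ) ≤ 11 := by
        refine (Int.le_of_dvd (by positivity) this).trans ?_
        interval_cases y <;> norm_num
      omega
    · subst h
      push_cast at hxy hM
      have hy1 : y ≤ 1 := by nlinarith [sq_nonneg x]
      have hy2 : -1 ≤ y := by nlinarith [sq_nonneg x]
      have hdd : (d : ℤ) ∣ 67108863 := by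
        have h := Int.natCast_dvd_natCast.2 hd
        norm_num at h
        exact h
      have hx1 : x ≤ 3 := by nlinarith [sq_nonneg y]
      have hx2 : -3 ≤ x := by nlinarith [sq_nonneg y]
      have := Int.dvd_coe_gcd hM hdd
      have h2 : (d:ℤ) ≤ 27 := by
        refine (Int.le_of_dvd (by positivity) this).trans ?_
        interval_cases y <;> norm_num
      omega
  -- main case
  obtain ⟨z, hz⟩ : ∃ z : ℤ, z = 4 * y - 3 := ⟨_, rfl⟩
  have hMz : (9 + 5 * (p:ℤ)) ^ 2 - p * (6 - 8 * y) ^ 2 = (9 + 5 * p) ^ 2 - 4 * p * z ^ 2 := by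
    rw [hz]; ring
  rw [hMz] at hM
  have hpos : (0:ℤ) ≤ (9 + 5 * p) ^ 2 - 4 * p * z ^ 2 := by
    have : (0:ℝ) ≤ (9 + 5 * p) ^ 2 - 4 * p * z ^ 2 := by
      set s := Real.sqrt p
      have hs : s ^ 2 = p := Real.sq_sqrt (by positivity)
      have hs0 : 0 ≤ s := Real.sqrt_nonneg _
      have hy : 2 * |(y:ℝ)| ≤ s := by
        apply abs_le_of_sq_le_sq' _ hs0 |>.2
        rw [hs, mul_pow, sq_abs]
        have : (p:ℝ) = x ^ 2 + 4 * y ^ 2 := by exact_mod_cast hxy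
        nlinarith [sq_nonneg (x:ℝ)]
      have hzz : |(z:ℝ)| ≤ 2 * s + 3 := by
        rw [hz]; push_cast
        rw [abs_le]
        constructor <;> nlinarith [neg_abs_le (y:ℝ), le_abs_self (y:ℝ)]
      have h1 : 2 * s * |(z:ℝ)| ≤ 9 + 5 * p := by
        nlinarith [sq_nonneg (s - 3)]
      have h2 : (2 * s * |(z:ℝ)|) ^ 2 ≤ (9 + 5 * p) ^ 2 :=
        pow_le_pow_left₀ (by positivity) h1 2
      rw [mul_pow, mul_pow, hs, sq_abs] at h2
      linarith
    exact_mod_cast this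
  obtain ⟨q, hq⟩ : ∃ q : ℕ, p = 8 * q + 5 := ⟨p / 8, by omega⟩
  have h16 : (16:ℤ) ∣ (9 + 5 * p) ^ 2 - 4 * p * z ^ 2 := by
    rw [hq, hz]; push_cast
    exact ⟨100*q^2+170*q+72 - 2 * q - 1 - (8*q+5)*(4*y^2-6*y+2), by ring⟩
  have hc : IsCoprime (16:ℤ) (d:ℤ) := by
    have : Nat.Coprime 16 d := by
      rw [show 16 = 2 ^ 4 by norm_num]
      apply Nat.Coprime.pow_left
      rw [Nat.coprime_two_left]
      exact ⟨p * k, by rw [hk]; ring⟩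
    exact_mod_cast Nat.isCoprime_iff_coprime.2 this
  obtain ⟨e, he⟩ := hc.mul_dvd h16 hM
  have hdpos : (0:ℤ) < d := by omega
  have he0 : 0 ≤ e := by
    by_contra h
    have : 16 * (d:ℤ) * e < 0 := mul_neg_of_pos_of_neg (by positivity) (by omega)
    omega
  have hdz : (d:ℤ) = 1 + 2 * p * k := by rw [hk]; push_cast; ring
  obtain ⟨j, hj⟩ : (p:ℤ) ∣ 16 * e - 81 :=
    ⟨90 + 25 * p - 4 * z ^ 2 - 16 * 2 * k * e, by rw [hdz] at he; linear_combination -he⟩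
  have hpz : (17:ℤ) ≤ p := by exact_mod_cast h17
  have hkz : (2:ℤ) ≤ k := by exact_mod_cast hk2
  have hmain : j + 162 * k + 2 * k * j * p = 90 + 25 * p - 4 * z ^ 2 := by
    have h0 : (p:ℤ) ≠ 0 := by omega
    apply mul_left_cancel₀ h0
    rw [hdz] at he
    linear_combination -he - (1 + 2 * p * k) * hj
  have hj1 : j ≤ 6 := by
    by_contra h
    have h7 : 7 ≤ j := by omega
    have h8 : 2 * 7 ≤ k * j := by nlinarith
    have h9 : 2 * 7 * p ≤ k * j * p := by nlinarith
    nlinarith [sq_nonneg z]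
  have hj2 : -5 < j := by
    by_contra h
    have h7 : j ≤ -5 := by omega
    have : p * j ≤ p * (-5) := mul_le_mul_of_nonneg_left h7 (by omega)
    omega
  have hj3 : j = 3 := by
    interval_cases j <;> omega
  subst hj3
  have hk4 : k ≤ 4 := by
    by_contra h
    have h5 : (5:ℤ) ≤ k := by omega
    have : 5 * (p:ℤ) ≤ k * p := mul_le_mul_of_nonneg_right h5 (by omega)
    nlinarith [sq_nonneg z]
  interval_cases k
  · subst hk
    exact no_four hp hp8 hd hf
  · push_cast at hmain
    have h7 : (7:ℤ) ∣ z := by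
      have : (7:ℤ) ∣ z ^ 2 := by omega
      exact Int.Prime.dvd_pow' (by norm_num : Nat.Prime 7) this
    obtain ⟨w, hw⟩ := h7
    rw [hw] at hmain
    have h7d : 7 ∣ d := by
      ring_nf at hmain
      omega
    have := hf 7 (by norm_num) h7d
    rw [Nat.mod_eq_of_lt (by omega)] at this
    omega
  · push_cast at hmain
    apply hd3
    have h3 : p % 3 ≠ 0 := by
      intro h
      have := (Nat.prime_dvd_prime_iff_eq Nat.prime_three hp).1 (Nat.dvd_of_mod_eq_zero h)
      omega
    have : z ^ 2 % 3 = 0 ∨ z ^ 2 % 3 = 1 := by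
      have : z % 3 = 0 ∨ z % 3 = 1 ∨ z % 3 = 2 := by omega
      rcases this with h | h | h <;> simp [pow_two, Int.mul_emod, h]
    omega

lemma transfer {p : ℕ} (hp : p.Prime) {ζ : ℂ} (hζ : IsPrimitiveRoot ζ p)
    (P : Polynomial ℤ) (h : Polynomial.aeval ζ P = 0) :
    (∑ t ∈ range p, (4:ℤ) ^ t) ∣ P.eval 4 := by
  have := Fact.mk hp
  have h1 := minpoly.isIntegrallyClosed_dvd (hζ.isIntegral hp.pos) h
  rw [← Polynomial.cyclotomic_eq_minpoly hζ hp.pos, Polynomial.cyclotomic_prime] at h1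
  have := Polynomial.eval_dvd (x := (4:ℤ)) h1
  simpa [Polynomial.eval_geom_sum] using this

lemma sum_zmod {p : ℕ} [NeZero p] {M : Type*} [AddCommMonoid M] (f : ZMod p → M) :
    ∑ a, f a = ∑ t ∈ range p, f (t : ZMod p) := by
  symm
  refine Finset.sum_nbij' (fun t => (t : ZMod p)) (fun a => a.val) ?_ ?_ ?_ ?_ ?_
  · simp
  · intro a _; simpa using ZMod.val_lt a
  · intro t ht; simpa using ZMod.val_cast_of_lt (by simpa using ht)
  · intro a _; simp
  · simp

lemma gauss_part {p : ℕ} [hp : Fact p.Prime] (hp8 : p % 8 = 5)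
    (χ : MulChar (ZMod p) GaussianInt)
    (hv : ∀ a, a ≠ 0 → χ a = ⟨1, 0⟩ ∨ χ a = ⟨0, 1⟩ ∨ χ a = ⟨-1, 0⟩ ∨ χ a = ⟨0, -1⟩)
    (hχ2 : χ ^ 2 ≠ 1) (hm : χ (-1) = -1) :
    ∃ a b : ℤ, (p : ℤ) = a ^ 2 + b ^ 2 ∧ 2 ∣ b ∧
      (∑ t ∈ range p, (4:ℤ) ^ t) ∣
        (∑ t ∈ range p, (χ (t : ZMod p) ^ 2).re * (4:ℤ) ^ t) ^ 2 - p ∧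
      (∑ t ∈ range p, (4:ℤ) ^ t) ∣
        (∑ t ∈ range p, ((χ (t : ZMod p)).re - (χ (t : ZMod p)).im) * (4:ℤ) ^ t) ^ 2 + p +
          b * (∑ t ∈ range p, (χ (t : ZMod p) ^ 2).re * (4:ℤ) ^ t) := by
  classical
  have hχ4 : χ ^ 4 = 1 := by
    refine MulChar.ext fun a => ?_
    rw [MulChar.pow_apply_coe, MulChar.one_apply_coe]
    rcases hv a a.ne_zero with h | h | h | h <;> rw [h] <;> decide
  have hχ1 : χ ≠ 1 := by rintro rfl; simp at hχ2
  have hinv : ∀ a, χ⁻¹ a = star (χ a) := by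
    intro a
    by_cases ha : a = 0
    · subst ha; rw [MulChar.map_zero, MulChar.map_zero, star_zero]
    have h1 : χ a * χ⁻¹ a = 1 := by
      rw [MulChar.inv_apply', ← map_mul, mul_inv_cancel₀ ha, map_one]
    have h2 : χ a * star (χ a) = 1 := by
      rcases hv a ha with h | h | h | h <;> rw [h] <;> decide
    have h3 : χ a ≠ 0 := by
      intro h; rw [h, zero_mul] at h1; exact zero_ne_one h1
    exact mul_left_cancel₀ h3 (h1.trans h2.symm)
  set f := GaussianInt.toComplex with hf
  have finj : Function.Injective f := GaussianInt.toComplex_injective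
  obtain ⟨J, hJ⟩ : ∃ J, J = jacobiSum χ χ := ⟨_, rfl⟩
  have hJ' : jacobiSum χ⁻¹ χ⁻¹ = star J := by
    rw [hJ, jacobiSum, jacobiSum, star_sum]
    exact Finset.sum_congr rfl fun a _ => by rw [hinv, hinv, star_mul']
  set χc := χ.ringHomComp f with hχc
  have hJc : jacobiSum χc χc = f J := by rw [hχc, jacobiSum_ringHomComp, hJ]
  have hJc' : jacobiSum χc⁻¹ χc⁻¹ = f (star J) := by
    rw [hχc, MulChar.ringHomComp_inv, jacobiSum_ringHomComp, hJ']
  have hc1 : χc ≠ 1 := (MulChar.ringHomComp_ne_one_iff finj).2 hχ1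
  have hc2 : χc ^ 2 ≠ 1 := by
    rw [hχc, MulChar.ringHomComp_pow]
    exact (MulChar.ringHomComp_ne_one_iff finj).2 hχ2
  have hc4 : χc ^ 4 = 1 := by
    rw [hχc, MulChar.ringHomComp_pow, hχ4, MulChar.ringHomComp_one]
  have hcm : χc (-1) = -1 := by
    rw [hχc, MulChar.ringHomComp_apply, hm]; simp
  have hcc : χc * χc ≠ 1 := by rwa [← pow_two]
  have hinv2 : χc⁻¹ * χc⁻¹ = χc ^ 2 := by
    rw [← mul_inv, inv_eq_iff_mul_eq_one, ← hc4, ← pow_two, ← pow_add]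
  have hcard : Fintype.card (ZMod p) = p := ZMod.card p
  have hJJ : J * star J = p := by
    apply finj
    rw [map_mul, ← hJc, ← hJc', jacobiSum_mul_jacobiSum_inv _ hc1 hc1 hcc, hcard]
    · simp
    · rw [ZMod.ringChar_zmod_n, ringChar.eq_zero]; exact hp.out.ne_zero.symm
  have hb : 2 ∣ J.im := by
    obtain ⟨z, -, hz⟩ := exists_jacobiSum_eq_neg_one_add (n := 4) (by norm_num) hχ4 hχ4
      (by rw [hcard]; omega) (μ := (⟨0, 1⟩ : GaussianInt)) (by
        rw [IsPrimitiveRoot.iff (by norm_num)]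
        refine ⟨by decide, fun l h0 h4 => ?_⟩
        interval_cases l <;> decide)
    rw [← hJ] at hz
    rw [hz, show ((⟨0, 1⟩ : GaussianInt) - 1) ^ 2 = ⟨0, -2⟩ by decide]
    simp
  have hζ := Complex.isPrimitiveRoot_exp p hp.out.ne_zero
  set ζ := Complex.exp (2 * Real.pi * Complex.I / p) with hζd
  have hψ := AddChar.zmodChar_primitive_of_primitive_root p hζ
  set ψ := AddChar.zmodChar p ((IsPrimitiveRoot.iff_def ζ p).mp hζ).left with hψd
  have hψt : ∀ t : ℕ, ψ (t : ZMod p) = ζ ^ t := fun t => AddChar.zmodChar_apply' _ t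
  obtain ⟨G, hG⟩ : ∃ G, G = gaussSum χc ψ := ⟨_, rfl⟩
  obtain ⟨G', hG'⟩ : ∃ G, G = gaussSum χc⁻¹ ψ := ⟨_, rfl⟩
  obtain ⟨g, hg⟩ : ∃ G, G = gaussSum (χc ^ 2) ψ := ⟨_, rfl⟩
  have e1 : g * f J = G ^ 2 := by
    rw [hg, hG, ← hJc, pow_two χc, jacobiSum_mul_nontrivial hcc, pow_two]
  have e2 : g * f (star J) = G' ^ 2 := by
    rw [hg, hG', ← hJc', ← hinv2, jacobiSum_mul_nontrivial (by rwa [hinv2]), pow_two]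
  have key : ∀ φ : MulChar (ZMod p) ℂ, φ ≠ 1 →
      gaussSum φ ψ * gaussSum φ⁻¹ ψ = φ (-1) * p := by
    intro φ hφ
    rw [← mul_gaussSum_inv_eq_gaussSum φ⁻¹, mul_left_comm, gaussSum_mul_gaussSum_eq_card hφ hψ,
      MulChar.inv_apply', inv_neg_one, hcard]
  have e3 : G * G' = -p := by
    rw [hG, hG', key _ hc1, hcm]; ring
  have e4 : g ^ 2 = p := by
    have h := key _ hc2
    have h' : (χc ^ 2)⁻¹ = χc ^ 2 := by rw [inv_eq_iff_mul_eq_one, ← hc4, ← pow_add]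
    rw [h', ← hg, MulChar.pow_apply' _ two_ne_zero, hcm] at h
    linear_combination h
  have eg : g = ∑ t ∈ range p, (((χ (t : ZMod p) ^ 2).re : ℤ) : ℂ) * ζ ^ t := by
    rw [hg, gaussSum, sum_zmod]
    refine Finset.sum_congr rfl fun t _ => ?_
    rw [hψt, MulChar.pow_apply' _ two_ne_zero, hχc, MulChar.ringHomComp_apply, ← map_pow]
    congr 1
    by_cases ha : (t : ZMod p) = 0
    · rw [ha, MulChar.map_zero]; simp
    rcases hv _ ha with h | h | h | h <;> rw [h] <;> simp [hf, pow_two, GaussianInt.toComplex_def]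
  have eh : 2 * ∑ t ∈ range p, ((((χ (t : ZMod p)).re - (χ (t : ZMod p)).im : ℤ)) : ℂ) * ζ ^ t
      = (1 + Complex.I) * G + (1 - Complex.I) * G' := by
    rw [hG, hG', gaussSum, gaussSum, sum_zmod, sum_zmod, mul_sum, mul_sum, mul_sum,
      ← sum_add_distrib]
    refine Finset.sum_congr rfl fun t _ => ?_
    rw [hψt, hχc, MulChar.ringHomComp_inv, MulChar.ringHomComp_apply,
      MulChar.ringHomComp_apply, hinv, hf, GaussianInt.toComplex_def, GaussianInt.toComplex_def]
    simp only [Zsqrtd.re_star, Zsqrtd.im_star]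
    push_cast
    linear_combination (-2 * ((χ (t:ZMod p)).im : ℂ) * ζ ^ t) * Complex.I_sq
  set Gp : Polynomial ℤ := ∑ t ∈ range p,
    Polynomial.C (χ (t : ZMod p) ^ 2).re * Polynomial.X ^ t with hGp
  set Hp : Polynomial ℤ := ∑ t ∈ range p,
    Polynomial.C ((χ (t : ZMod p)).re - (χ (t : ZMod p)).im) * Polynomial.X ^ t with hHp
  have aG : Polynomial.aeval ζ Gp = g := by
    rw [eg, hGp, map_sum]
    exact Finset.sum_congr rfl fun t _ => by simp
  obtain ⟨h, hh⟩ : ∃ h, h = Polynomial.aeval ζ Hp := ⟨_, rfl⟩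
  have aH : 2 * h = (1 + Complex.I) * G + (1 - Complex.I) * G' := by
    rw [← eh, hh, hHp, map_sum]
    congr 1
    exact Finset.sum_congr rfl fun t _ => by simp
  have vG : Gp.eval 4 = ∑ t ∈ range p, (χ (t : ZMod p) ^ 2).re * (4:ℤ) ^ t := by
    rw [hGp, Polynomial.eval_finsetSum]
    exact Finset.sum_congr rfl fun t _ => by simp
  have vH : Hp.eval 4 =
      ∑ t ∈ range p, ((χ (t : ZMod p)).re - (χ (t : ZMod p)).im) * (4:ℤ) ^ t := by
    rw [hHp, Polynomial.eval_finsetSum]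
    exact Finset.sum_congr rfl fun t _ => by simp
  refine ⟨J.re, J.im, ?_, hb, ?_, ?_⟩
  · have := congrArg Zsqrtd.re hJJ
    simp at this
    linear_combination -this
  · have := transfer hp.out hζ (Gp ^ 2 - (p : Polynomial ℤ)) (by
      rw [map_sub, map_pow, aG, e4]; simp)
    simpa [vG] using this
  · have := transfer hp.out hζ (Hp ^ 2 + (p : Polynomial ℤ) + Polynomial.C J.im * Gp) (by
      rw [map_add, map_add, map_pow, map_mul, aG, ← hh]
      simp only [map_natCast, eq_intCast]
      have hI := Complex.I_sq
      rw [hf, GaussianInt.toComplex_def] at e1 e2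
      simp only [Zsqrtd.re_star, Zsqrtd.im_star] at e2
      push_cast at e2
      have h4 : 4 * (h ^ 2 + p + J.im * g) = 0 := by
        linear_combination (2 * h + (1 + Complex.I) * G + (1 - Complex.I) * G') * aH
          - 2 * Complex.I * e1 + 2 * Complex.I * e2 + 4 * e3
          + (G ^ 2 + G' ^ 2 - 2 * G * G' + 4 * J.im * g) * hI
      simpa using h4)
    simpa [vG, vH] using this

lemma exists_char {p θ : ℕ} [hp : Fact p.Prime] (hp8 : p % 8 = 5)
    (hθ : IsPrimitiveRoot (θ : ZMod p) (p - 1)) :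
    ∃ χ : MulChar (ZMod p) GaussianInt, χ (θ : ZMod p) = ⟨0, 1⟩ := by
  have hp2 := hp.out.two_le
  have hθu : IsUnit (θ : ZMod p) := hθ.isUnit (by omega)
  have hg : ∀ x : (ZMod p)ˣ, x ∈ Subgroup.zpowers hθu.unit := by
    intro x
    have hx : (x : ZMod p) ^ (p - 1) = 1 := ZMod.pow_card_sub_one_eq_one x.ne_zero
    have : NeZero (p - 1) := ⟨by omega⟩
    obtain ⟨i, -, hi⟩ := hθ.eq_pow_of_pow_eq_one hx
    refine ⟨i, Units.ext ?_⟩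
    simpa using hi
  let μ : GaussianIntˣ := ⟨⟨0, 1⟩, ⟨0, -1⟩, by decide, by decide⟩
  have hμ : μ ∈ rootsOfUnity (Fintype.card (ZMod p)ˣ) GaussianInt := by
    rw [mem_rootsOfUnity, ZMod.card_units]
    obtain ⟨m, hm⟩ : 4 ∣ p - 1 := by omega
    have h4 : μ ^ 4 = 1 := Units.ext (by
      rw [Units.val_pow_eq_pow_val, Units.val_one]
      change (⟨0, 1⟩ : GaussianInt) ^ 4 = 1
      decide)
    rw [hm, pow_mul, h4, one_pow]
  refine ⟨MulChar.ofRootOfUnity hμ hg, ?_⟩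
  have := MulChar.ofRootOfUnity_spec hμ hg
  rwa [IsUnit.unit_spec] at this

lemma gI_pow (i j : ℕ) : (⟨0, 1⟩ : GaussianInt) ^ (i + 4 * j) = ⟨0, 1⟩ ^ i := by
  rw [pow_add, pow_mul, show (⟨0, 1⟩ : GaussianInt) ^ 4 = 1 by decide, one_pow, mul_one]

lemma exists_rep {p θ : ℕ} [hp : Fact p.Prime] (hp8 : p % 8 = 5)
    (hθ : IsPrimitiveRoot (θ : ZMod p) (p - 1)) (a : ZMod p) (ha : a ≠ 0) :
    ∃ i j : ℕ, i < 4 ∧ j < (p - 1) / 4 ∧ a = (θ : ZMod p) ^ (i + 4 * j) := by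
  have hp2 := hp.out.two_le
  have : NeZero (p - 1) := ⟨by omega⟩
  obtain ⟨m, hm, h⟩ := hθ.eq_pow_of_pow_eq_one (ZMod.pow_card_sub_one_eq_one ha)
  refine ⟨m % 4, m / 4, Nat.mod_lt _ (by norm_num), by omega, ?_⟩
  rw [Nat.mod_add_div, h]

lemma mem_cycD {p θ : ℕ} [hp : Fact p.Prime] (hp8 : p % 8 = 5)
    (hθ : IsPrimitiveRoot (θ : ZMod p) (p - 1)) (χ : MulChar (ZMod p) GaussianInt)
    (hχ : χ (θ : ZMod p) = ⟨0, 1⟩) (t i : ℕ) (ht : t < p) (hi : i < 4) :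
    t ∈ cycD p θ i ↔ χ (t : ZMod p) = ⟨0, 1⟩ ^ i := by
  rw [cycD, Finset.mem_image]
  constructor
  · rintro ⟨j, -, rfl⟩
    rw [ZMod.natCast_mod, Nat.cast_pow, map_pow, hχ, gI_pow]
  · intro h
    have h0 : (t : ZMod p) ≠ 0 := by
      intro h0
      rw [h0, MulChar.map_zero] at h
      interval_cases i <;> revert h <;> decide
    obtain ⟨i', j, hi', hj, e⟩ := exists_rep hp8 hθ _ h0
    rw [e, map_pow, hχ, gI_pow] at h
    have : i' = i := by
      interval_cases i <;> interval_cases i' <;> first | rfl | (exfalso; revert h; decide)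
    subst this
    refine ⟨j, Finset.mem_range.2 hj, ?_⟩
    have e' : ((θ ^ (i' + 4 * j) : ℕ) : ZMod p) = (t : ZMod p) := by rw [e]; push_cast; rfl
    rw [ZMod.natCast_eq_natCast_iff'] at e'
    rw [e', Nat.mod_eq_of_lt ht]

lemma gcd_bound {p θ : ℕ} (hp : p.Prime) (hp8 : p % 8 = 5)
    (hθ : IsPrimitiveRoot (θ : ZMod p) (p - 1)) :
    Nat.gcd (4 ^ p - 1) (seqVal p (graySeq (seqS2 p θ) (seqS4 p θ))) ≤ 3 * (1 + 2 * p) := by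
  have hpf := Fact.mk hp
  obtain ⟨χ, hχ⟩ := exists_char hp8 hθ
  have hval : ∀ a : ZMod p, a ≠ 0 → ∃ i < 4, χ a = ⟨0, 1⟩ ^ i := by
    intro a ha
    obtain ⟨i, j, hi, -, e⟩ := exists_rep hp8 hθ a ha
    exact ⟨i, hi, by rw [e, map_pow, hχ, gI_pow]⟩
  have hv : ∀ a : ZMod p, a ≠ 0 →
      χ a = ⟨1, 0⟩ ∨ χ a = ⟨0, 1⟩ ∨ χ a = ⟨-1, 0⟩ ∨ χ a = ⟨0, -1⟩ := by
    intro a ha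
    obtain ⟨i, hi, e⟩ := hval a ha
    rw [e]
    interval_cases i <;> decide
  have hθu : IsUnit (θ : ZMod p) := hθ.isUnit (by omega)
  have hχ2 : χ ^ 2 ≠ 1 := by
    intro h
    have h' := DFunLike.congr_fun h (θ : ZMod p)
    rw [MulChar.pow_apply' _ two_ne_zero, hχ, MulChar.one_apply hθu] at h'
    revert h'; decide
  have hm : χ (-1) = -1 := by
    have h1 : (θ : ZMod p) ^ ((p - 1) / 2) = -1 := by
      have hs : ((θ : ZMod p) ^ ((p - 1) / 2)) ^ 2 = 1 := by
        rw [← pow_mul, show (p - 1) / 2 * 2 = p - 1 by omega, hθ.pow_eq_one]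
      rcases (mul_self_eq_one_iff.1 ((pow_two _).symm.trans hs)) with h | h
      · exact absurd h (hθ.pow_ne_one_of_pos_of_lt (by omega) (by omega))
      · exact h
    rw [← h1, map_pow, hχ, show (p - 1) / 2 = 2 + 4 * (p / 8) by omega, gI_pow]
    decide
  obtain ⟨a, b, hab, hb, hG, hH⟩ := gauss_part hp8 χ hv hχ2 hm
  set Φ := ∑ t ∈ range p, (4:ℤ) ^ t with hΦ
  set G := ∑ t ∈ range p, (χ (t : ZMod p) ^ 2).re * (4:ℤ) ^ t with hGd
  set H := ∑ t ∈ range p, ((χ (t : ZMod p)).re - (χ (t : ZMod p)).im) * (4:ℤ) ^ t with hHd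
  obtain ⟨U, hU⟩ : ∃ U, U = seqVal p (graySeq (seqS2 p θ) (seqS4 p θ)) := ⟨_, rfl⟩
  rw [← hU]
  have hrel : 2 * (U : ℤ) = G + 2 * H + 3 * (Φ - 1) := by
    have h1 : (1 : ℤ) = ∑ t ∈ range p, (if t = 0 then 1 else 0) * (4:ℤ) ^ t := by
      rw [Finset.sum_eq_single 0]
      · simp
      · intro t _ h; simp [h]
      · intro h; exact absurd (Finset.mem_range.2 hp.pos) h
    have hone : Φ - 1 = Φ - ∑ t ∈ range p, (if t = 0 then 1 else 0) * (4:ℤ) ^ t := by rw [← h1]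
    rw [hone, hU, seqVal, hGd, hHd, hΦ]
    push_cast
    rw [← Finset.sum_sub_distrib, mul_sum, mul_sum, mul_sum, ← sum_add_distrib,
      ← sum_add_distrib]
    refine Finset.sum_congr rfl fun t ht => ?_
    have htp := Finset.mem_range.1 ht
    have m0 := mem_cycD hp8 hθ χ hχ t 0 htp (by norm_num)
    have m2 := mem_cycD hp8 hθ χ hχ t 2 htp (by norm_num)
    have m3 := mem_cycD hp8 hθ χ hχ t 3 htp (by norm_num)
    suffices hs : 2 * ((graySeq (seqS2 p θ) (seqS4 p θ) t : ℕ) : ℤ) =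
        (χ (t : ZMod p) ^ 2).re + 2 * ((χ (t : ZMod p)).re - (χ (t : ZMod p)).im)
          + 3 * (1 - if t = 0 then 1 else 0) by
      linear_combination (4:ℤ) ^ t * hs
    rw [graySeq, seqS2, seqS4]
    simp only [Finset.mem_union, m0, m2, m3]
    by_cases h0 : t = 0
    · subst h0
      rw [Nat.cast_zero, MulChar.map_zero]
      decide
    · have h0' : (t : ZMod p) ≠ 0 := by
        intro h
        rw [ZMod.natCast_eq_zero_iff] at h
        exact h0 (Nat.eq_zero_of_dvd_of_lt h htp)
      rw [if_neg h0]
      rcases hv _ h0' with h | h | h | h <;> rw [h] <;> decide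
  have h1 : (1:ℕ) ≤ 4 ^ p := Nat.one_le_pow _ _ (by norm_num)
  obtain ⟨F, hF⟩ : ∃ F, F = ∑ t ∈ range p, 4 ^ t := ⟨_, rfl⟩
  have hFΦ : (F : ℤ) = Φ := by rw [hF, hΦ]; push_cast; rfl
  have h3F : 4 ^ p - 1 = 3 * F := by
    have := geom_sum_mul_add 3 p
    rw [hF]; norm_num at this; omega
  obtain ⟨d, hd⟩ : ∃ d, d = Nat.gcd F U := ⟨_, rfl⟩
  have hdF : d ∣ F := hd ▸ Nat.gcd_dvd_left _ _
  have hdU : d ∣ U := hd ▸ Nat.gcd_dvd_right _ _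
  have hF3 : F % 3 = p % 3 := by
    rw [hF, Finset.sum_nat_mod]
    simp [Nat.pow_mod]
  have hd3 : ¬ 3 ∣ d := by
    intro h
    have h3 := h.trans hdF
    have := (Nat.prime_dvd_prime_iff_eq Nat.prime_three hp).1 (Nat.dvd_of_mod_eq_zero (by omega))
    omega
  obtain ⟨y, hy⟩ := hb
  have hM : (d : ℤ) ∣ (9 + 5 * p) ^ 2 - p * (6 - 8 * y) ^ 2 := by
    have dΦ : (d : ℤ) ∣ Φ := hFΦ ▸ Int.natCast_dvd_natCast.2 hdF
    obtain ⟨u, hu⟩ := Int.natCast_dvd_natCast.2 hdU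
    obtain ⟨v, hv'⟩ := dΦ.trans hG
    obtain ⟨w, hw⟩ := dΦ.trans hH
    obtain ⟨f, hf⟩ := dΦ
    rw [hy] at hw
    -- L := (6-8y) G - (9+5p) is divisible by d
    have hL : (d : ℤ) ∣ (6 - 8 * y) * G - (9 + 5 * p) := by
      have h2H : 2 * H = 3 - G + d * (2 * u - 3 * f) := by
        rw [hu, hf] at hrel
        linear_combination -hrel
      exact ⟨-(4 * w - (2 * u - 3 * f) * (3 - G + 2 * H) - v), by
        linear_combination -4 * hw + (3 - G + 2 * H) * h2H + hv'⟩
    obtain ⟨l, hl⟩ := hL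
    exact ⟨(6 - 8 * y) ^ 2 * v - l * ((6 - 8 * y) * G + (9 + 5 * p)), by
      linear_combination (6 - 8 * y) ^ 2 * hv' - ((6 - 8 * y) * G + (9 + 5 * p)) * hl⟩
  have hle : d ≤ 1 + 2 * p := final_nt a y hp hp8 (by rw [hab, hy]; ring)
    (h3F ▸ hdF.mul_left 3) hd3 hM
  have hg : Nat.gcd (4 ^ p - 1) U ∣ 3 * d := by
    rw [h3F, hd, ← Nat.gcd_mul_left]
    exact Nat.dvd_gcd (Nat.gcd_dvd_left _ _) ((Nat.gcd_dvd_right _ _).mul_left 3)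
  have hd0 : 0 < d := Nat.pos_of_ne_zero (by rintro rfl; simp at hd3)
  exact (Nat.le_of_dvd (by omega) hg).trans (by omega)

theorem theorem1
    (p : ℕ) (hp : p.Prime) (hp8 : p % 8 = 5)
    (x y : ℤ) (hx : x % 4 = 1) (hxy : (p : ℤ) = x ^ 2 + 4 * y ^ 2)
    (θ : ℕ) (hθ : IsPrimitiveRoot (θ : ZMod p) (p - 1))
    (hy : 16 * (((cycD p θ 0).filter (fun a => (a + 1) % p ∈ cycD p θ 1)).card : ℤ)
        = (p : ℤ) + 1 + 2 * x - 8 * y)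
    :
    ⌊Real.logb 4 (((4 ^ p - 1 : ℕ) : ℝ) / ((3 * (1 + 2 * (p : ℝ)))) + 1)⌋ ≤
      adicComplexity4 p (graySeq (seqS2 p θ) (seqS4 p θ)) := by
  rw [adicComplexity4]
  have hb := gcd_bound hp hp8 hθ
  have h1 : (1:ℕ) < 4 ^ p := Nat.one_lt_pow hp.ne_zero (by norm_num)
  have hg : 0 < Nat.gcd (4 ^ p - 1) (seqVal p (graySeq (seqS2 p θ) (seqS4 p θ))) :=
    Nat.gcd_pos_of_pos_left _ (by omega)
  have hbr : ((Nat.gcd (4 ^ p - 1) (seqVal p (graySeq (seqS2 p θ) (seqS4 p θ))) : ℕ) : ℝ)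
      ≤ 3 * (1 + 2 * (p : ℝ)) := by exact_mod_cast hb
  have hgr : (0:ℝ) < ((Nat.gcd (4 ^ p - 1) (seqVal p (graySeq (seqS2 p θ) (seqS4 p θ))) : ℕ) : ℝ) := by
    exact_mod_cast hg
  apply Int.floor_le_floor
  apply Real.logb_le_logb_of_le (by norm_num) (by positivity)
  gcongr
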